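/- Let $n > m > 2$ be integers, let $d = \lfloor (n-m+2)/2 \rfloor$, and for $1 \le i \le d$ let $a_i(m) = (m-1)\left(\binom{m+2i-1}{m} - \binom{m+2i-3}{m}\right)$ and $b_i(m) = \binom{m+2i-4}{m-1} - \binom{m+2i-2}{m-1}$ (as integers). Then for every integer $l$ with $0 \le l \le n$, $-\binom{l}{m} = \sum_{i=1}^{d} \min\left(0,\ a_i(m) + b_i(m)\, l\right)$. -/

import Mathlib

/-- The coefficient `a_i(m)` from Theorem 2. -/
def aCoefNeg (m i : ℕ) : ℤ :=
  ((m : ℤ) - 1) * (((m + 2 * i - 1).choose m : ℤ) - ((m + 2 * i - 3).choose m : ℤ))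

/-- The coefficient `b_i(m)` from Theorem 2. -/
def bCoefNeg (m i : ℕ) : ℤ :=
  ((m + 2 * i - 4).choose (m - 1) : ℤ) - ((m + 2 * i - 2).choose (m - 1) : ℤ)

/-!
For `f = fun k ↦ -(k.choose m)`, a concave sequence, let `Sₖ` be the line through `(k, f k)` and
`(k + 1, f (k + 1))`. Then `aᵢ + bᵢ x = S_{m-2+2i}(x) - S_{m-4+2i}(x)`, and `S_{m-2} = 0`. Concavity
makes `k ↦ Sₖ(l)` decrease up to `k = l` and increase from `k = l - 1` on, so that truncating the
increments above at `0` keeps exactly the decreasing part. The sum therefore telescopes to the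
value at `l` of a line which passes through `(l, f l)`.
-/

open scoped fwdDiff

theorem sum_range_min_zero_sub {α : Type*} [AddCommGroup α] [LinearOrder α] [IsOrderedAddMonoid α]
    {u : ℕ → α} {a d : ℕ} (had : a ≤ d) (h_anti : ∀ i < a, u (i + 1) ≤ u i)
    (h_mono : ∀ i ≥ a, u i ≤ u (i + 1)) :
    ∑ i ∈ Finset.range d, min 0 (u (i + 1) - u i) = u a - u 0 := by
  induction d, had using Nat.le_induction with
  | base =>
    rw [← Finset.sum_range_sub]
    exact Finset.sum_congr rfl fun i hi ↦
      min_eq_right (sub_nonpos.2 (h_anti i (Finset.mem_range.1 hi)))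
  | succ d had ih =>
    rw [Finset.sum_range_succ, ih, min_eq_left (sub_nonneg.2 (h_mono d had)), add_zero]

/-- The line through the points `(k, f k)` and `(k + 1, f (k + 1))` of the graph of a sequence `f`,
as a function of the abscissa `x`. -/
def secantLine {R : Type*} [Ring R] (f : ℕ → R) (k : ℕ) (x : R) : R :=
  f k + Δ_[1] f k * (x - k)

namespace secantLine

section Ring

variable {R : Type*} [Ring R] (f : ℕ → R) (k : ℕ)

theorem apply_left : secantLine f k k = f k := by
  simp [secantLine]

theorem apply_right : secantLine f k (k + 1 : ℕ) = f (k + 1) := by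
  simp [secantLine, fwdDiff]

theorem succ_sub (x : R) :
    secantLine f (k + 1) x - secantLine f k x =
      (Δ_[1] f (k + 1) - Δ_[1] f k) * (x - (k + 1 : ℕ)) := by
  simp only [secantLine, fwdDiff, Nat.cast_add, Nat.cast_one]
  noncomm_ring

end Ring

section Concave

variable {R : Type*} [Ring R] [PartialOrder R] [IsOrderedRing R] {f : ℕ → R}

theorem antitoneOn (hf : Antitone (Δ_[1] f)) (x : R) :
    AntitoneOn (fun k ↦ secantLine f k x) {k | (k : R) ≤ x} := by
  have h_conn : Set.OrdConnected {k : ℕ | (k : R) ≤ x} :=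
    Set.ordConnected_Iic.preimage_mono Nat.mono_cast
  refine antitoneOn_of_add_one_le h_conn fun k _ _ hk ↦ sub_nonpos.1 ?_
  rw [succ_sub]
  exact mul_nonpos_of_nonpos_of_nonneg (sub_nonpos.2 (hf k.le_succ)) (sub_nonneg.2 hk)

theorem monotoneOn (hf : Antitone (Δ_[1] f)) (x : R) :
    MonotoneOn (fun k ↦ secantLine f k x) {k | x ≤ (k + 1 : ℕ)} := by
  have h_conn : Set.OrdConnected {k : ℕ | x ≤ (k + 1 : ℕ)} :=
    Set.ordConnected_Ici.preimage_mono fun _ _ h ↦ Nat.mono_cast (Nat.succ_le_succ h)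
  refine monotoneOn_of_le_add_one h_conn fun k _ hk _ ↦ sub_nonneg.1 ?_
  rw [succ_sub]
  exact mul_nonneg_of_nonpos_of_nonpos (sub_nonpos.2 (hf k.le_succ)) (sub_nonpos.2 hk)

end Concave

theorem sum_min_zero_sub {R : Type*} [Ring R] [LinearOrder R] [IsOrderedRing R] {f : ℕ → R}
    (hf : Antitone (Δ_[1] f)) {p l d : ℕ} (hd : (l - p) / 2 ≤ d) :
    ∑ i ∈ Finset.range d,
        min 0 (secantLine f (p + 2 * (i + 1)) (l : R) - secantLine f (p + 2 * i) (l : R)) =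
      secantLine f (p + 2 * ((l - p) / 2)) (l : R) - secantLine f p (l : R) := by
  refine sum_range_min_zero_sub (u := fun i ↦ secantLine f (p + 2 * i) (l : R)) hd
    (fun i hi ↦ antitoneOn hf l ?_ ?_ ?_) (fun i hi ↦ monotoneOn hf l ?_ ?_ ?_)
  · exact Nat.mono_cast (by omega : p + 2 * i ≤ l)
  · exact Nat.mono_cast (by omega : p + 2 * (i + 1) ≤ l)
  · omega
  · exact Nat.mono_cast (by omega : l ≤ p + 2 * i + 1)
  · exact Nat.mono_cast (by omega : l ≤ p + 2 * (i + 1) + 1)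
  · omega

end secantLine

/-- The sequence `k ↦ -(k.choose m)`, whose secant lines generate the coefficients `aCoefNeg` and
`bCoefNeg`. -/
def negChoose (m k : ℕ) : ℤ :=
  -(k.choose m : ℤ)

theorem fwdDiff_negChoose_succ (m : ℕ) : Δ_[1] (negChoose (m + 1)) = negChoose m := by
  ext k
  simp only [fwdDiff, negChoose, Nat.choose_succ_succ', Nat.cast_add]
  ring

theorem antitone_negChoose (m : ℕ) : Antitone (negChoose m) := fun _ _ h ↦
  neg_le_neg (Nat.mono_cast (Nat.choose_mono m h))

theorem secantLine_negChoose_succ (m k : ℕ) (x : ℤ) :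
    secantLine (negChoose (m + 1)) k x = m * (k + 1).choose (m + 1) - k.choose m * x := by
  have h_absorb : ((k + 1) * k.choose m : ℤ) = (k + 1).choose (m + 1) * (m + 1) := by
    exact_mod_cast Nat.add_one_mul_choose_eq k m
  have h_pascal : ((k + 1).choose (m + 1) : ℤ) = k.choose m + k.choose (m + 1) := by
    exact_mod_cast Nat.choose_succ_succ' k m
  rw [secantLine, fwdDiff_negChoose_succ, negChoose, negChoose]
  linear_combination h_absorb + h_pascal

theorem secantLine_negChoose_add_two_self (p : ℕ) (x : ℤ) :
    secantLine (negChoose (p + 2)) p x = 0 := by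
  simp [secantLine_negChoose_succ]

theorem aCoefNeg_add_bCoefNeg_mul (p i : ℕ) (x : ℤ) :
    aCoefNeg (p + 2) (i + 1) + bCoefNeg (p + 2) (i + 1) * x =
      secantLine (negChoose (p + 2)) (p + 2 * (i + 1)) x -
        secantLine (negChoose (p + 2)) (p + 2 * i) x := by
  have h_a : p + 2 + 2 * (i + 1) - 1 = p + 2 * (i + 1) + 1 := by omega
  have h_a' : p + 2 + 2 * (i + 1) - 3 = p + 2 * i + 1 := by omega
  have h_b : p + 2 + 2 * (i + 1) - 4 = p + 2 * i := by omega
  have h_b' : p + 2 + 2 * (i + 1) - 2 = p + 2 * (i + 1) := by omega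
  rw [aCoefNeg, bCoefNeg, h_a, h_a', h_b, h_b', secantLine_negChoose_succ,
    secantLine_negChoose_succ, Nat.add_sub_cancel (m := 1)]
  push_cast
  ring

theorem secantLine_negChoose_eq (p l : ℕ) :
    secantLine (negChoose (p + 2)) (p + 2 * ((l - p) / 2)) l = negChoose (p + 2) l := by
  have h_cases : l < p ∨ l = p + 2 * ((l - p) / 2) ∨ l = p + 2 * ((l - p) / 2) + 1 := by omega
  generalize hk : p + 2 * ((l - p) / 2) = k at h_cases ⊢
  rcases h_cases with h_lt | rfl | rfl
  · obtain rfl : k = p := by omega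
    rw [secantLine_negChoose_add_two_self, negChoose, Nat.choose_eq_zero_of_lt (by omega)]
    rfl
  · exact secantLine.apply_left _ _
  · exact secantLine.apply_right _ _

theorem stmt_4_general {m d l : ℕ} (hm : 2 ≤ m) (hl : l < m + 2 * d) :
    -(l.choose m : ℤ) =
      ∑ i ∈ Finset.Icc 1 d, min 0 (aCoefNeg m i + bCoefNeg m i * (l : ℤ)) := by
  obtain ⟨p, rfl⟩ := Nat.exists_eq_add_of_le' hm
  have h_concave : Antitone (Δ_[1] (negChoose (p + 2))) := by
    rw [fwdDiff_negChoose_succ]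
    exact antitone_negChoose (p + 1)
  symm
  calc ∑ i ∈ Finset.Icc 1 d, min 0 (aCoefNeg (p + 2) i + bCoefNeg (p + 2) i * (l : ℤ))
    _ = ∑ i ∈ Finset.range d,
          min 0 (aCoefNeg (p + 2) (i + 1) + bCoefNeg (p + 2) (i + 1) * (l : ℤ)) := by
      rw [← Finset.Ico_add_one_right_eq_Icc, Finset.range_eq_Ico,
        Finset.sum_Ico_add' (fun i ↦ min 0 (aCoefNeg (p + 2) i + bCoefNeg (p + 2) i * (l : ℤ)))]
    _ = secantLine (negChoose (p + 2)) (p + 2 * ((l - p) / 2)) l -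
          secantLine (negChoose (p + 2)) p l := by
      simp only [aCoefNeg_add_bCoefNeg_mul]
      exact secantLine.sum_min_zero_sub h_concave (by omega)
    _ = -(l.choose (p + 2) : ℤ) := by
      rw [secantLine_negChoose_eq, secantLine_negChoose_add_two_self, sub_zero, negChoose]

theorem stmt_4 (n m : ℕ) (hm : 2 < m) (hmn : m < n)
    (l : ℕ) (hl : l ≤ n) :
    -(l.choose m : ℤ)
      = ∑ i ∈ Finset.Icc 1 ((n - m + 2) / 2),
          min 0 (aCoefNeg m i + bCoefNeg m i * (l : ℤ)) :=
  stmt_4_general hm.le (by omega)
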